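/- arXiv:math/0104099 — 2 statements merged into one kernel-verified Lean document; each statement's English description precedes it below -/
import Mathlib

section
/- In End((ℚ²)^{⊗d}) with e, f, h the sl_2-operators from the derivation action, for a, b, c ∈ ℕ with s := a+b+c-d ≥ 1 the following reduction formula holds: f^{(a)} binom(H_2, b) e^{(c)} = Σ_{k=s}^{min(a,c)} (-1)^{k-s} binom(k-1, s-1) binom(b+k, k) f^{(a-k)} binom(H_2, b+k) e^{(c-k)}, where x^{(m)} = x^m/m! and H_2 is the operator induced by E_{22}. -/
open scoped BigOperators

/-- `V^{⊗d}` for `V = ℚ^n`, modeled as functions on the basis of pure tensors. -/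
abbrev TP (n d : ℕ) : Type := (Fin d → Fin n) → ℚ

/-- The operator on `V^{⊗d}` induced (via the derivation action) by the matrix unit `E i j`. -/
noncomputable def EU (n d : ℕ) (i j : Fin n) : Module.End ℚ (TP n d) where
  toFun f := fun w => ∑ p : Fin d, if w p = i then f (Function.update w p j) else 0
  map_add' f g := by
    funext w
    simp only [Pi.add_apply]
    rw [← Finset.sum_add_distrib]
    refine Finset.sum_congr rfl fun p _ => ?_
    split <;> simp
  map_smul' c f := by
    funext w
    simp only [Pi.smul_apply, smul_eq_mul, RingHom.id_apply, Finset.mul_sum]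
    refine Finset.sum_congr rfl fun p _ => ?_
    split <;> simp

/-- The place-permutation operator on `V^{⊗d}`. -/
def permOp (n d : ℕ) (σ : Equiv.Perm (Fin d)) : Module.End ℚ (TP n d) where
  toFun f := fun w => f (w ∘ σ)
  map_add' _ _ := rfl
  map_smul' _ _ := rfl

/-- content (weight) of a basis tensor -/
def content (n d : ℕ) (w : Fin d → Fin n) : Fin n → ℕ :=
  fun k => (Finset.univ.filter (fun p => w p = k)).card

/-- projection onto the span of basis tensors of content `μ` -/
noncomputable def proj (n d : ℕ) (μ : Fin n → ℕ) : Module.End ℚ (TP n d) where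
  toFun f := fun w => if content n d w = μ then f w else 0
  map_add' f g := by funext w; by_cases h : content n d w = μ <;> simp [h]
  map_smul' c f := by funext w; by_cases h : content n d w = μ <;> simp [h]

/-- the set `Λ(n,d)` of `n`-part compositions of `d`, as a finset of `ℕ^n` -/
def Lam (n d : ℕ) : Finset (Fin n → ℕ) :=
  ((Finset.univ : Finset (Fin n → Fin (d+1))).image (fun μ k => (μ k : ℕ))).filter
    (fun lam => ∑ k, lam k = d)

/-- `binom(A, m) = A(A-1)⋯(A-m+1)/m!` for an operator `A` -/
noncomputable def binomOp {M : Type*} [AddCommGroup M] [Module ℚ M]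
    (A : Module.End ℚ M) (m : ℕ) : Module.End ℚ M :=
  (m.factorial : ℚ)⁻¹ • Polynomial.aeval A (descPochhammer ℚ m)

/-- divided power `A^{(m)} = A^m/m!` -/
noncomputable def dpow {M : Type*} [AddCommGroup M] [Module ℚ M]
    (A : Module.End ℚ M) (m : ℕ) : Module.End ℚ M :=
  (m.factorial : ℚ)⁻¹ • A ^ m

namespace SetInclusion

open Finset Matrix

variable {α : Type*} [Fintype α] [DecidableEq α]

/-- The matrix over the subsets of `α` whose `(S, T)` entry indicates that `T` arises from `S` by
adding `c` elements. -/
def inclMatrix (α : Type*) [Fintype α] [DecidableEq α] (c : ℕ) :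
    Matrix (Finset α) (Finset α) ℚ :=
  of fun S T => if S ⊆ T ∧ S.card + c = T.card then 1 else 0

/-- The diagonal matrix of cardinalities. -/
def cardMatrix (α : Type*) [Fintype α] [DecidableEq α] : Matrix (Finset α) (Finset α) ℚ :=
  diagonal fun S => (S.card : ℚ)

theorem sum_inclMatrix_one_mul (S : Finset α) (F : Finset α → ℚ) :
    ∑ T, inclMatrix α 1 S T * F T = ∑ x ∈ Sᶜ, F (insert x S) := by
  have himage : (univ.filter fun T => S ⊆ T ∧ S.card + 1 = T.card) =
      Sᶜ.image (fun x => insert x S) := by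
    ext T
    simp [← exists_eq_insert_iff]
  simp only [inclMatrix, of_apply, ite_mul, one_mul, zero_mul]
  rw [← sum_filter, himage, sum_image]
  intro x hx y _ hxy
  exact (insert_inj (by simpa using hx)).1 hxy

theorem sum_inclMatrix_one_transpose_mul (S : Finset α) (F : Finset α → ℚ) :
    ∑ T, (inclMatrix α 1)ᵀ S T * F T = ∑ x ∈ S, F (S.erase x) := by
  have himage : (univ.filter fun T => T ⊆ S ∧ T.card + 1 = S.card) =
      S.image (fun x => S.erase x) := by
    ext T
    simp only [← exists_eq_insert_iff, mem_filter, mem_univ, true_and, mem_image]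
    constructor
    · rintro ⟨x, hx, rfl⟩
      exact ⟨x, mem_insert_self _ _, erase_insert hx⟩
    · rintro ⟨x, hx, rfl⟩
      exact ⟨x, notMem_erase _ _, insert_erase hx⟩
  simp only [inclMatrix, transpose_apply, of_apply, ite_mul, one_mul, zero_mul]
  rw [← sum_filter, himage, sum_image]
  exact S.erase_injOn

theorem inclMatrix_one_mul (c : ℕ) :
    inclMatrix α 1 * inclMatrix α c = ((c + 1 : ℕ) : ℚ) • inclMatrix α (c + 1) := by
  ext S U
  rw [mul_apply, sum_inclMatrix_one_mul S fun T => inclMatrix α c T U]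
  simp only [inclMatrix, of_apply, Matrix.smul_apply, smul_eq_mul, mul_ite, mul_one, mul_zero]
  rw [sum_boole]
  split_ifs with h
  · have hfilter : (Sᶜ.filter fun x => insert x S ⊆ U ∧ (insert x S).card + c = U.card) =
        U \ S := by
      ext x
      simp only [mem_filter, mem_compl, mem_sdiff, insert_subset_iff]
      constructor
      · rintro ⟨hx, ⟨hxU, _⟩, _⟩
        exact ⟨hxU, hx⟩
      · rintro ⟨hxU, hx⟩
        refine ⟨hx, ⟨hxU, h.1⟩, ?_⟩
        rw [card_insert_of_notMem hx]
        omega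
    rw [hfilter, card_sdiff_of_subset h.1]
    congr 1
    omega
  · rw [Nat.cast_eq_zero, card_eq_zero, filter_eq_empty_iff]
    rintro x hx ⟨hsub, hcard⟩
    rw [card_insert_of_notMem (by simpa using hx)] at hcard
    exact h ⟨(insert_subset_iff.1 hsub).2, by omega⟩

theorem inclMatrix_one_pow (c : ℕ) :
    inclMatrix α 1 ^ c = (c.factorial : ℚ) • inclMatrix α c := by
  induction c with
  | zero =>
    ext S T
    have : (S ⊆ T ∧ S.card = T.card) ↔ S = T :=
      ⟨fun h => eq_of_subset_of_card_le h.1 h.2.ge, fun h => by simp [h]⟩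
    simp [inclMatrix, one_apply, this]
  | succ c ih =>
    rw [pow_succ', ih, mul_smul_comm, inclMatrix_one_mul, smul_smul, Nat.factorial_succ]
    push_cast
    rw [mul_comm]

theorem aeval_cardMatrix (b : ℕ) :
    Polynomial.aeval (cardMatrix α) (descPochhammer ℚ b) =
      (b.factorial : ℚ) • diagonal fun S : Finset α => (S.card.choose b : ℚ) := by
  have h : cardMatrix α = diagonalAlgHom ℚ fun S : Finset α => (S.card : ℚ) := rfl
  rw [h, Polynomial.aeval_algHom_apply, Polynomial.aeval_pi_apply]
  ext S T
  simp only [diagonalAlgHom_apply, Polynomial.coe_aeval_eq_eval,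
    descPochhammer_eval_eq_descFactorial, Nat.descFactorial_eq_factorial_mul_choose,
    Matrix.smul_apply, diagonal_apply, Nat.cast_mul]
  split_ifs <;> simp

/-- The product of the divided powers of the lowering, weight and raising matrices. -/
def pbwMatrix (α : Type*) [Fintype α] [DecidableEq α] (a b c : ℕ) :
    Matrix (Finset α) (Finset α) ℚ :=
  (inclMatrix α a)ᵀ * (diagonal fun S : Finset α => (S.card.choose b : ℚ)) * inclMatrix α c

theorem pbwMatrix_apply (a b c : ℕ) (S U : Finset α) :
    pbwMatrix α a b c S U = ∑ T, if T ⊆ S ∩ U ∧ T.card + a = S.card ∧ T.card + c = U.card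
      then (T.card.choose b : ℚ) else 0 := by
  rw [pbwMatrix, Matrix.mul_apply]
  refine sum_congr rfl fun T _ => ?_
  simp only [mul_diagonal, inclMatrix, transpose_apply, of_apply, subset_inter_iff]
  by_cases h₁ : T ⊆ S <;> by_cases h₂ : T ⊆ U <;> by_cases h₃ : T.card + a = S.card <;>
    by_cases h₄ : T.card + c = U.card <;> simp [h₁, h₂, h₃, h₄]

theorem pbwMatrix_apply_of_card {a b c t : ℕ} {S U : Finset α} (hS : t + a = S.card)
    (hU : t + c = U.card) :
    pbwMatrix α a b c S U = ((S ∩ U).card.choose t * t.choose b : ℕ) := by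
  have hiff (T : Finset α) : (T ⊆ S ∩ U ∧ T.card + a = S.card ∧ T.card + c = U.card) ↔
      T ∈ powersetCard t (S ∩ U) := by
    rw [mem_powersetCard]
    refine and_congr_right fun _ => ⟨fun h => by omega, fun h => by omega⟩
  simp only [pbwMatrix_apply, hiff]
  rw [← sum_filter, filter_mem_eq_inter, univ_inter,
    sum_congr rfl fun T hT => by rw [(mem_powersetCard.1 hT).2]]
  simp

theorem pbwMatrix_apply_eq_zero {a b c : ℕ} {S U : Finset α}
    (h : ∀ t, b ≤ t → t + a = S.card → t + c ≠ U.card) :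
    pbwMatrix α a b c S U = 0 := by
  rw [pbwMatrix_apply]
  refine sum_eq_zero fun T _ => ?_
  split_ifs with hT
  · rw [Nat.cast_eq_zero]
    refine Nat.choose_eq_zero_of_lt (not_le.1 fun hb => h _ hb hT.2.1 hT.2.2)
  · rfl

theorem sum_range_alternating_choose_mul_choose {r n N : ℕ} (hr : r < n) (hN : n ≤ r + N) :
    ∑ j ∈ range N, (-1 : ℤ) ^ j * (r + j).choose r * n.choose (r + 1 + j) = 1 := by
  have hstep (n : ℕ) (hrn : r ≤ n) (hN : n < r + N) :
      ∑ j ∈ range N, (-1 : ℤ) ^ j * (r + j).choose r * n.choose (r + j) =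
        if n = r then 1 else 0 := by
    have hterm (j : ℕ) : (-1 : ℤ) ^ j * (r + j).choose r * n.choose (r + j) =
        n.choose r * ((-1) ^ j * (n - r).choose j) := by
      have := Nat.choose_mul (n := n) (Nat.le_add_right r j)
      rw [Nat.add_sub_cancel_left] at this
      zify at this
      linear_combination (-1 : ℤ) ^ j * this
    simp only [hterm]
    rw [← mul_sum]
    have hsub : range (n - r + 1) ⊆ range N := range_subset_range.2 (by omega)
    rw [← sum_subset hsub, Int.alternating_sum_range_choose]
    · split_ifs <;> first | omega | simp_all
    · intro j _ hj
      rw [Nat.choose_eq_zero_of_lt (by simpa using hj)]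
      simp
  have hsucc (n : ℕ) :
      ∑ j ∈ range N, (-1 : ℤ) ^ j * (r + j).choose r * (n + 1).choose (r + 1 + j) =
        ∑ j ∈ range N, (-1 : ℤ) ^ j * (r + j).choose r * n.choose (r + j) +
        ∑ j ∈ range N, (-1 : ℤ) ^ j * (r + j).choose r * n.choose (r + 1 + j) := by
    rw [← sum_add_distrib]
    refine sum_congr rfl fun j _ => ?_
    rw [show r + 1 + j = r + j + 1 by ring, Nat.choose_succ_succ]
    push_cast
    ring
  induction n, hr using Nat.le_induction with
  | base =>
    rw [hsucc, hstep r le_rfl (by omega), if_pos rfl, sum_eq_zero, add_zero]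
    intro j _
    rw [Nat.choose_eq_zero_of_lt (by omega : r < r + 1 + j)]
    simp
  | succ n hn ih =>
    rw [hsucc, hstep n (by omega) (by omega), if_neg (by omega), ih (by omega), zero_add]

theorem sum_Icc_alternating_choose_mul_choose {s n M : ℕ} (hs : 0 < s) (hsn : s ≤ n)
    (hn : n ≤ M) :
    ∑ k ∈ Icc s M, (-1 : ℚ) ^ (k - s) * (k - 1).choose (s - 1) * n.choose k = 1 := by
  obtain ⟨r, rfl⟩ : ∃ r, s = r + 1 := ⟨s - 1, by omega⟩
  have h := sum_range_alternating_choose_mul_choose (r := r) (n := n) (N := M - r)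
    (by omega) (by omega)
  rw [← Ico_add_one_right_eq_Icc, sum_Ico_eq_sum_range, Nat.add_sub_add_right]
  have h' := congrArg (Int.cast : ℤ → ℚ) h
  push_cast at h'
  refine Eq.trans ?_ h'
  refine sum_congr rfl fun j _ => ?_
  rw [show r + 1 + j - (r + 1) = j by omega, show r + 1 + j - 1 = r + j by omega,
    Nat.add_sub_cancel]

theorem choose_mul_choose_mul_choose (m t b k : ℕ) :
    (b + k).choose k * (m.choose (t + k) * (t + k).choose (b + k)) =
      m.choose t * t.choose b * (m - t).choose k := by
  have h₁ := Nat.choose_mul (n := t + k) (Nat.le_add_left k b)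
  have h₂ := Nat.choose_mul (n := m) (Nat.le_add_right t k)
  rw [Nat.add_sub_cancel, Nat.add_sub_cancel] at h₁
  rw [Nat.add_sub_cancel_left, Nat.choose_symm_add] at h₂
  calc _ = m.choose (t + k) * ((t + k).choose (b + k) * (b + k).choose k) := by ring
    _ = m.choose (t + k) * (t + k).choose k * t.choose b := by rw [h₁]; ring
    _ = _ := by rw [h₂]; ring

theorem pbwMatrix_reduction (a b c : ℕ) (hs : Fintype.card α < a + b + c) :
    pbwMatrix α a b c =
      ∑ k ∈ Icc (a + b + c - Fintype.card α) (min a c),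
        ((-1 : ℚ) ^ (k - (a + b + c - Fintype.card α)) *
            (Nat.choose (k - 1) (a + b + c - Fintype.card α - 1)) * (Nat.choose (b + k) k)) •
          pbwMatrix α (a - k) (b + k) (c - k) := by
  ext S U
  rw [Matrix.sum_apply]
  simp only [Matrix.smul_apply, smul_eq_mul]
  by_cases h : ∃ t, b ≤ t ∧ t + a = S.card ∧ t + c = U.card
  · obtain ⟨t, hb, hS, hU⟩ := h
    have hunion := card_union_add_card_inter S U
    have hle := card_le_univ (S ∪ U)
    have hinterS := card_le_card (inter_subset_left (s₁ := S) (s₂ := U))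
    have hinterU := card_le_card (inter_subset_right (s₁ := S) (s₂ := U))
    rw [pbwMatrix_apply_of_card hS hU]
    set s := a + b + c - Fintype.card α with hsdef
    set m := (S ∩ U).card
    have hone := sum_Icc_alternating_choose_mul_choose (s := s) (n := m - t) (M := min a c)
      (by omega) (by omega) (by omega)
    refine Eq.trans (mul_one _).symm (Eq.trans (congrArg _ hone.symm) ?_)
    rw [mul_sum]
    refine sum_congr rfl fun k hk => ?_
    rw [mem_Icc] at hk
    rw [pbwMatrix_apply_of_card (t := t + k) (by omega) (by omega)]
    have := choose_mul_choose_mul_choose m t b k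
    qify at this
    push_cast
    linear_combination (-(-1 : ℚ) ^ (k - s) * (k - 1).choose (s - 1)) * this
  · push Not at h
    rw [pbwMatrix_apply_eq_zero h, eq_comm]
    refine sum_eq_zero fun k hk => ?_
    rw [mem_Icc] at hk
    rw [pbwMatrix_apply_eq_zero, mul_zero]
    intro t hbt hS hU
    exact h (t - k) (by omega) (by omega) (by omega)

/-- Binary words correspond to the sets of positions of their letter `1`. -/
def wordEquiv (α : Type*) [Fintype α] [DecidableEq α] : (α → Fin 2) ≃ Finset α where
  toFun w := univ.filter fun p => w p = 1
  invFun T p := if p ∈ T then 1 else 0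
  left_inv w := by
    funext p
    simp only [mem_filter, mem_univ, true_and]
    split_ifs <;> omega
  right_inv T := by
    ext p
    simp

/-- The action of matrices over subsets of the positions on the tensor power. -/
noncomputable def matrixAction (d : ℕ) :
    Matrix (Finset (Fin d)) (Finset (Fin d)) ℚ →ₐ[ℚ] Module.End ℚ (TP 2 d) :=
  (toLinAlgEquiv' (R := ℚ) (n := Fin d → Fin 2)).toAlgHom.comp
    (reindexAlgEquiv ℚ ℚ (wordEquiv (Fin d)).symm).toAlgHom

theorem matrixAction_apply (d : ℕ) (M : Matrix (Finset (Fin d)) (Finset (Fin d)) ℚ)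
    (g : TP 2 d) (w : Fin d → Fin 2) :
    matrixAction d M g w =
      ∑ T, M (wordEquiv (Fin d) w) T * g ((wordEquiv (Fin d)).symm T) := by
  rw [← (wordEquiv (Fin d)).sum_comp]
  simp [matrixAction, mulVec, dotProduct]

theorem matrixAction_inclMatrix_one (d : ℕ) :
    matrixAction d (inclMatrix (Fin d) 1) = EU 2 d 0 1 := by
  refine LinearMap.ext fun g => funext fun w => ?_
  rw [matrixAction_apply,
    sum_inclMatrix_one_mul _ fun T => g ((wordEquiv (Fin d)).symm T)]
  change _ = ∑ p : Fin d, if w p = 0 then g (Function.update w p 1) else 0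
  rw [← sum_filter]
  refine sum_congr ?_ fun p _ => congrArg g ?_
  · ext p
    simp only [wordEquiv, Equiv.coe_fn_mk, mem_compl, mem_filter, mem_univ, true_and]
    omega
  · rw [Equiv.symm_apply_eq]
    ext q
    by_cases hq : q = p <;> simp [wordEquiv, Function.update_apply, hq]

theorem matrixAction_inclMatrix_one_transpose (d : ℕ) :
    matrixAction d (inclMatrix (Fin d) 1)ᵀ = EU 2 d 1 0 := by
  refine LinearMap.ext fun g => funext fun w => ?_
  rw [matrixAction_apply,
    sum_inclMatrix_one_transpose_mul _ fun T => g ((wordEquiv (Fin d)).symm T)]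
  change _ = ∑ p : Fin d, if w p = 1 then g (Function.update w p 0) else 0
  rw [← sum_filter]
  refine sum_congr (by simp [wordEquiv]) fun p _ => congrArg g ?_
  rw [Equiv.symm_apply_eq]
  ext q
  by_cases hq : q = p <;> simp [wordEquiv, Function.update_apply, hq]

theorem matrixAction_cardMatrix (d : ℕ) :
    matrixAction d (cardMatrix (Fin d)) = EU 2 d 1 1 := by
  refine LinearMap.ext fun g => funext fun w => ?_
  rw [matrixAction_apply]
  change _ = ∑ p : Fin d, if w p = 1 then g (Function.update w p 1) else 0
  have h (p : Fin d) : (if w p = 1 then g (Function.update w p 1) else 0) =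
      if w p = 1 then g w else 0 := by
    split_ifs with hp
    · rw [← hp, Function.update_eq_self]
    · rfl
  simp only [h]
  rw [← sum_filter, sum_const]
  simp only [cardMatrix, diagonal_apply, ite_mul, zero_mul, sum_ite_eq, mem_univ, if_true,
    Equiv.symm_apply_apply, nsmul_eq_mul]
  rfl

theorem dpow_mul_binomOp_mul_dpow (d a b c : ℕ) :
    dpow (EU 2 d 1 0) a * binomOp (EU 2 d 1 1) b * dpow (EU 2 d 0 1) c =
      matrixAction d (pbwMatrix (Fin d) a b c) := by
  have hfac (m : ℕ) : (m.factorial : ℚ) ≠ 0 := Nat.cast_ne_zero.2 m.factorial_ne_zero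
  have he : dpow (EU 2 d 0 1) c = matrixAction d (inclMatrix (Fin d) c) := by
    rw [dpow, ← matrixAction_inclMatrix_one, ← map_pow, inclMatrix_one_pow, map_smul,
      inv_smul_smul₀ (hfac c)]
  have hf : dpow (EU 2 d 1 0) a = matrixAction d (inclMatrix (Fin d) a)ᵀ := by
    rw [dpow, ← matrixAction_inclMatrix_one_transpose, ← map_pow, ← transpose_pow,
      inclMatrix_one_pow, transpose_smul, map_smul, inv_smul_smul₀ (hfac a)]
  have hH : binomOp (EU 2 d 1 1) b = matrixAction d
      (diagonal fun S : Finset (Fin d) => (S.card.choose b : ℚ)) := by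
    rw [binomOp, ← matrixAction_cardMatrix, Polynomial.aeval_algHom_apply, aeval_cardMatrix,
      map_smul, inv_smul_smul₀ (hfac b)]
  rw [he, hf, hH, pbwMatrix, map_mul, map_mul]

end SetInclusion

/-- The reduction formula
`f^{(a)} binom(H₂,b) e^{(c)} = Σ_{k=s}^{min(a,c)} (-1)^{k-s} binom(k-1,s-1) binom(b+k,k)
f^{(a-k)} binom(H₂,b+k) e^{(c-k)}` in `End((ℚ²)^{⊗d})`, where `s = a+b+c-d ≥ 1`,
`e = E_{12}`, `f = E_{21}`, `H₂ = E_{22}`. -/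
theorem reduction_formula_classical (d a b c : ℕ) (hs : d < a + b + c) :
    dpow (EU 2 d 1 0) a * binomOp (EU 2 d 1 1) b * dpow (EU 2 d 0 1) c =
      ∑ k ∈ Finset.Icc (a + b + c - d) (min a c),
        (((-1 : ℚ) ^ (k - (a + b + c - d)) * (Nat.choose (k - 1) (a + b + c - d - 1)) *
            (Nat.choose (b + k) k)) •
          (dpow (EU 2 d 1 0) (a - k) * binomOp (EU 2 d 1 1) (b + k) *
            dpow (EU 2 d 0 1) (c - k))) := by
  have h := congrArg (SetInclusion.matrixAction d)
    (SetInclusion.pbwMatrix_reduction (α := Fin d) a b c (by simpa using hs))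
  simp only [Fintype.card_fin, map_sum, map_smul] at h
  simpa only [SetInclusion.dpow_mul_binomOp_mul_dpow] using h
end

section
/- Let B ∈ ℕ^n with |B| > d. Then in End(V^{⊗d}) (V = ℚ^n, gl_n derivation action), the operator H_B := Π_{k=1}^n binom(H_k, b_k) is zero, where H_k is the operator induced by E_{kk} and binom(H, m) = H(H-1)···(H-m+1)/m!. -/
open scoped BigOperators

theorem EU_self_apply (n d : ℕ) (k : Fin n) (f : TP n d) (w : Fin d → Fin n) :
    EU n d k k f w = (content n d w k : ℚ) * f w := by
  have h : ∀ p : Fin d, (if w p = k then f (Function.update w p k) else 0) =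
      if w p = k then f w else 0 := by
    intro p
    split_ifs with hp
    · rw [← hp, Function.update_eq_self]
    · rfl
  change (∑ p : Fin d, if w p = k then f (Function.update w p k) else 0) = _
  simp [h, ← Finset.sum_filter, content]

theorem aeval_EU_self_apply (n d : ℕ) (k : Fin n) (p : Polynomial ℚ) (f : TP n d)
    (w : Fin d → Fin n) :
    Polynomial.aeval (EU n d k k) p f w = p.eval (content n d w k : ℚ) * f w := by
  induction p using Polynomial.induction_on generalizing f with
  | C a => simp [Module.algebraMap_end_apply]
  | add p q hp hq => simp [hp, hq, add_mul]
  | monomial m a ih =>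
    rw [pow_succ, ← mul_assoc, map_mul, Module.End.mul_apply, ih, Polynomial.aeval_X,
      EU_self_apply, Polynomial.eval_mul_X, mul_assoc]

theorem binomOp_EU_self_apply (n d : ℕ) (k : Fin n) (m : ℕ) (f : TP n d) (w : Fin d → Fin n) :
    binomOp (EU n d k k) m f w =
      (m.factorial : ℚ)⁻¹ * (descPochhammer ℚ m).eval (content n d w k : ℚ) * f w := by
  simp [binomOp, aeval_EU_self_apply, mul_assoc]

theorem sum_content (n d : ℕ) (w : Fin d → Fin n) : ∑ k, content n d w k = d := by
  simpa [content] using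
    (Finset.card_eq_sum_card_fiberwise (f := w) (s := Finset.univ) (t := Finset.univ)
      (by simp)).symm

/-- If every operator in a list acts on the `w`-coordinate by a scalar, and one of these scalars
is zero, then the product of the list kills the `w`-coordinate. -/
theorem list_prod_apply_eq_zero {n d : ℕ} (w : Fin d → Fin n) (l : List (Module.End ℚ (TP n d)))
    (hl : ∀ A ∈ l, ∃ c : ℚ, ∀ f : TP n d, A f w = c * f w)
    (h0 : ∃ A ∈ l, ∀ f : TP n d, A f w = 0) (f : TP n d) : l.prod f w = 0 := by
  induction l with
  | nil => simp at h0
  | cons A l ih =>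
    rw [List.prod_cons, Module.End.mul_apply]
    obtain ⟨A', hA', hz⟩ := h0
    rcases List.mem_cons.1 hA' with rfl | hmem
    · exact hz _
    · obtain ⟨c, hc⟩ := hl A List.mem_cons_self
      rw [hc, ih (fun A hA => hl A (List.mem_cons_of_mem _ hA)) ⟨A', hmem, hz⟩, mul_zero]

/-- For `B ∈ ℕ^n` with `|B| > d`, the operator `H_B = Π_k binom(H_k, b_k)` vanishes on
`V^{⊗d}`. -/
theorem HB_vanishes (n d : ℕ) (B : Fin n → ℕ) (hB : d < ∑ k, B k) :
    (List.ofFn (fun k : Fin n => binomOp (EU n d k k) (B k))).prod = 0 := by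
  refine LinearMap.ext fun f => funext fun w => ?_
  obtain ⟨k, -, hk⟩ : ∃ k ∈ Finset.univ, content n d w k < B k :=
    Finset.exists_lt_of_sum_lt (by rwa [sum_content])
  refine list_prod_apply_eq_zero w _ ?_ ⟨_, (List.mem_ofFn' _ _).2 ⟨k, rfl⟩, fun g => ?_⟩ f
  · intro A hA
    obtain ⟨i, rfl⟩ := (List.mem_ofFn' _ _).1 hA
    exact ⟨_, fun g => binomOp_EU_self_apply n d i (B i) g w⟩
  · rw [binomOp_EU_self_apply, descPochhammer_eval_coe_nat_of_lt hk, mul_zero, zero_mul]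
end
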